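/- arXiv:2510.10838 — 2 statements merged into one kernel-verified Lean document; each statement's English description precedes it below -/
import Mathlib

section
/- Semisimplicity of orientation-preserving automorphisms of median graphs: let 𝒢 be a median graph endowed with a cubical orientation o, let f be an automorphism of 𝒢 preserving o, and let x be a vertex realizing the translation length of f, i.e., dist(x, f(x)) ≤ dist(y, f(y)) for every vertex y. Then dist(x, fⁿ(x)) = n · dist(x, f(x)) for every n ∈ ℕ; in particular f is either elliptic (it fixes a vertex) or loxodromic. -/
/-!
Suppose the orbit of a minimizer `x` backtracks at `φⁿ x`, with `n` least among all minimizers. A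
median of `x`, `φⁿ x`, `φⁿ⁺¹ x` then yields a neighbour `φⁿ z` of `φⁿ x` which is closer both to
`x` and to `φⁿ⁺¹ x`. The second property puts `z` on a geodesic from `x` to `φ x`, so `z` is a
minimizer as well and `dist z (φⁿ z) = dist x (φⁿ x)`. Comparing distances, the edge from `x` to
`z` is parallel to the edge from `φⁿ z` to `φⁿ x`, which is the reverse of its own translate; a
cubical orientation is constant along parallel edges, so `φⁿ` cannot preserve it.

When `φ x ≠ x`, concatenating the translates of a geodesic from `x` to `φ x` gives an axis of `φ`:
a path is geodesic as soon as it contains arbitrarily long geodesic segments around each vertex.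
-/

/-- `m` is a median of `x`, `y`, `z` in the graph `G`. -/
def IsMedianOf {V : Type*} (G : SimpleGraph V) (m x y z : V) : Prop :=
  G.dist x y = G.dist x m + G.dist m y ∧
  G.dist y z = G.dist y m + G.dist m z ∧
  G.dist x z = G.dist x m + G.dist m z

/-- A median graph: connected, and every triple of vertices has a unique median. -/
def MedianGraph {V : Type*} (G : SimpleGraph V) : Prop :=
  G.Connected ∧ ∀ x y z : V, ∃! m : V, IsMedianOf G m x y z

/-- A cubical orientation: to every ordered pair of adjacent vertices it assigns a
Boolean, with opposite values on the two orderings, and equal values on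
square-opposite edges (with consistent orderings). -/
def CubicalOrientation {V : Type*} (G : SimpleGraph V) (o : V → V → Bool) : Prop :=
  (∀ u v : V, G.Adj u v → o u v ≠ o v u) ∧
  (∀ a b c d : V, a ≠ b → a ≠ c → a ≠ d → b ≠ c → b ≠ d → c ≠ d →
    G.Adj a b → G.Adj c d → G.Adj a c → G.Adj b d → o a b = o c d)

open SimpleGraph

section Distance

variable {V W : Type*} {G : SimpleGraph V} {H : SimpleGraph W}

theorem edist_map_le (φ : G →g H) (a b : V) : H.edist (φ a) (φ b) ≤ G.edist a b :=
  le_iInf fun p => (edist_le (p.map φ)).trans_eq (by rw [Walk.length_map])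

theorem dist_map_iso (φ : G ≃g H) (a b : V) : H.dist (φ a) (φ b) = G.dist a b := by
  have h_edist : H.edist (φ a) (φ b) = G.edist a b :=
    le_antisymm (edist_map_le φ.toHom a b) <| by
      simpa using edist_map_le φ.symm.toHom (φ a) (φ b)
  rw [SimpleGraph.dist, SimpleGraph.dist, h_edist]

theorem coe_pow_iso (φ : G ≃g G) (n : ℕ) : ⇑(φ ^ n) = φ^[n] :=
  hom_coe_pow (fun ψ : G ≃g G => ⇑ψ) rfl (fun _ _ => rfl) φ n

theorem exists_adj_dist_eq_dist_add_one (hc : G.Connected) {a b : V} (hab : a ≠ b) :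
    ∃ w, G.Adj a w ∧ G.dist a b = G.dist w b + 1 := by
  obtain ⟨p, hp⟩ := hc.exists_walk_length_eq_dist a b
  cases p with
  | nil => exact absurd rfl hab
  | @cons _ w _ haw q =>
    have h_le : G.dist w b ≤ q.length := dist_le q
    have h_lip := haw.diff_dist_adj (u := b)
    rw [Walk.length_cons] at hp
    simp only [dist_comm (u := b)] at h_lip
    exact ⟨w, haw, by omega⟩

end Distance

section Modular

variable {V : Type*} {G : SimpleGraph V}

/-- A modular graph: connected, and every triple of vertices has a median, possibly several. -/
def ModularGraph (G : SimpleGraph V) : Prop :=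
  G.Connected ∧ ∀ x y z : V, ∃ m : V, IsMedianOf G m x y z

theorem MedianGraph.modularGraph (hG : MedianGraph G) : ModularGraph G :=
  ⟨hG.1, fun x y z => (hG.2 x y z).exists⟩

theorem ModularGraph.exists_adj_of_dist_lt (hG : ModularGraph G) {x y z : V}
    (h : G.dist x z < G.dist x y + G.dist y z) :
    ∃ w, G.Adj y w ∧ G.dist x y = G.dist x w + 1 ∧ G.dist y z = G.dist w z + 1 := by
  obtain ⟨m, hxy, hyz, hxz⟩ := hG.2 x y z
  have hym : y ≠ m := by
    rintro rfl
    exact h.ne hxz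
  obtain ⟨w, hyw, hw⟩ := exists_adj_dist_eq_dist_add_one hG.1 hym
  have h_triangle_x : G.dist x w ≤ G.dist x m + G.dist m w := hG.1.dist_triangle
  have h_triangle_z : G.dist w z ≤ G.dist w m + G.dist m z := hG.1.dist_triangle
  have h_lip_x : G.dist x y ≤ G.dist x w + G.dist w y := hG.1.dist_triangle
  have h_lip_z : G.dist y z ≤ G.dist y w + G.dist w z := hG.1.dist_triangle
  rw [dist_comm (u := m)] at hxy h_triangle_x
  rw [dist_comm (u := w) (v := y)] at h_lip_x
  rw [dist_eq_one_iff_adj.2 hyw] at h_lip_x h_lip_z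
  exact ⟨w, hyw, by omega, by omega⟩

/-- The ordered edges `(u, v)` and `(p, q)` are parallel, i.e. they cross the same hyperplane in
the same direction. This is the Djoković–Winkler relation: `u` is closer to `p` and `v` is closer
to `q`. -/
structure Parallel (G : SimpleGraph V) (u v p q : V) : Prop where
  adj_left : G.Adj u v
  adj_right : G.Adj p q
  dist_left : G.dist u q = G.dist u p + 1
  dist_right : G.dist v p = G.dist v q + 1

theorem Parallel.dist_eq {u v p q : V} (h : Parallel G u v p q) : G.dist u p = G.dist v q := by
  have hp := h.adj_left.diff_dist_adj (u := p)
  have hq := h.adj_left.diff_dist_adj (u := q)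
  have h_left := h.dist_left
  have h_right := h.dist_right
  simp only [dist_comm (u := p), dist_comm (u := q)] at hp hq
  omega

theorem Parallel.dist_eq_of_adj (hc : G.Connected) {u v p q w : V} (h : Parallel G u v p q)
    (huw : G.Adj u w) (hw : G.dist u p = G.dist w p + 1) : G.dist w q = G.dist v q := by
  have h_left := h.dist_left
  have h_eq := h.dist_eq
  have h_le : G.dist w q ≤ G.dist w p + G.dist p q := hc.dist_triangle
  have h_ge : G.dist u q ≤ G.dist u w + G.dist w q := hc.dist_triangle
  rw [dist_eq_one_iff_adj.2 h.adj_right] at h_le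
  rw [dist_eq_one_iff_adj.2 huw] at h_ge
  omega

theorem Parallel.dist_eq_two_of_adj (hc : G.Connected) {u v p q w : V} (h : Parallel G u v p q)
    (huw : G.Adj u w) (hw : G.dist u p = G.dist w p + 1) : G.dist w v = 2 := by
  have h_right := h.dist_right
  have h_eq := h.dist_eq
  have h_le : G.dist w v ≤ G.dist w u + G.dist u v := hc.dist_triangle
  have h_ge : G.dist v p ≤ G.dist v w + G.dist w p := hc.dist_triangle
  rw [dist_eq_one_iff_adj.2 huw.symm, dist_eq_one_iff_adj.2 h.adj_left] at h_le
  rw [dist_comm (u := v) (v := w)] at h_ge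
  omega

theorem Parallel.exists_square (hG : ModularGraph G) {u v p q : V} (h : Parallel G u v p q)
    (hup : u ≠ p) :
    ∃ w m, G.Adj u w ∧ G.Adj v m ∧ u ≠ m ∧ v ≠ w ∧ G.dist u p = G.dist w p + 1 ∧
      Parallel G w m p q := by
  obtain ⟨w, huw, hw⟩ := exists_adj_dist_eq_dist_add_one hG.1 hup
  have h_left := h.dist_left
  have h_right := h.dist_right
  have h_eq := h.dist_eq
  have hwq : G.dist w q = G.dist v q := h.dist_eq_of_adj hG.1 huw hw
  have hwv : G.dist w v = 2 := h.dist_eq_two_of_adj hG.1 huw hw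
  obtain ⟨m, hvm, hwm, hmq⟩ : ∃ m, G.Adj v m ∧ G.dist w v = G.dist w m + 1 ∧
      G.dist v q = G.dist m q + 1 := hG.exists_adj_of_dist_lt (by omega)
  have hmp : G.dist m p = G.dist m q + 1 := by
    have h_le : G.dist m p ≤ G.dist m q + G.dist q p := hG.1.dist_triangle
    have h_ge : G.dist v p ≤ G.dist v m + G.dist m p := hG.1.dist_triangle
    rw [dist_eq_one_iff_adj.2 h.adj_right.symm] at h_le
    rw [dist_eq_one_iff_adj.2 hvm] at h_ge
    omega
  have hwm_adj : G.Adj w m := dist_eq_one_iff_adj.1 (by omega)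
  refine ⟨w, m, huw, hvm, ?_, ?_, hw, hwm_adj, h.adj_right, by omega, hmp⟩
  · rintro rfl
    omega
  · rintro rfl
    omega

theorem CubicalOrientation.eq_of_parallel {o : V → V → Bool} (ho : CubicalOrientation G o)
    (hG : ModularGraph G) {u v p q : V} (h : Parallel G u v p q) : o u v = o p q := by
  induction hk : G.dist u p generalizing u v with
  | zero =>
    obtain rfl : u = p := hG.1.dist_eq_zero_iff.1 hk
    obtain rfl : v = q := hG.1.dist_eq_zero_iff.1 (h.dist_eq ▸ hk)
    rfl
  | succ k ih =>
    have hup : u ≠ p := by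
      rintro rfl
      simp at hk
    obtain ⟨w, m, huw, hvm, hum, hvw, hw, hwm⟩ := h.exists_square hG hup
    calc o u v = o w m := ho.2 u v w m h.adj_left.ne huw.ne hum hvw hvm.ne hwm.adj_left.ne
          h.adj_left hwm.adj_left huw hvm
      _ = o p q := ih hwm (by omega)

theorem CubicalOrientation.not_parallel_map_swap {o : V → V → Bool} (ho : CubicalOrientation G o)
    (hG : ModularGraph G) {ψ : V → V} (hψ : ∀ u v, G.Adj u v → o (ψ u) (ψ v) = o u v) (u v : V) :
    ¬ Parallel G u v (ψ v) (ψ u) := fun h =>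
  ho.1 u v h.adj_left <| (ho.eq_of_parallel hG h).trans (hψ v u h.adj_left.symm)

end Modular

section MinSet

variable {V : Type*} {G : SimpleGraph V} {φ : G ≃g G} {x z : V}

/-- The minimizing set of an automorphism: the vertices realizing its translation length. -/
def minSet (φ : G ≃g G) : Set V :=
  {x | ∀ y, G.dist x (φ x) ≤ G.dist y (φ y)}

theorem dist_eq_of_mem_minSet (hx : x ∈ minSet φ) (hz : z ∈ minSet φ) :
    G.dist x (φ x) = G.dist z (φ z) :=
  le_antisymm (hx z) (hz x)

theorem mem_minSet_of_adj (hx : x ∈ minSet φ) (hxz : G.Adj x z)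
    (h : G.dist x (φ x) = G.dist z (φ x) + 1) : z ∈ minSet φ := by
  have h_lip := (φ.map_adj_iff.2 hxz).diff_dist_adj (u := z)
  exact fun y => le_trans (by omega) (hx y)

theorem orientation_pow_apply {α : Type*} {o : V → V → α}
    (hφ : ∀ u v, G.Adj u v → o (φ u) (φ v) = o u v) (n : ℕ) (u v : V) (huv : G.Adj u v) :
    o ((φ ^ n) u) ((φ ^ n) v) = o u v := by
  induction n with
  | zero => rfl
  | succ n ih =>
    rw [pow_succ', RelIso.mul_apply, RelIso.mul_apply, hφ _ _ ((φ ^ n).map_adj_iff.2 huv), ih]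

theorem dist_pow_succ_apply (φ : G ≃g G) (n : ℕ) (a b : V) :
    G.dist ((φ ^ n) a) ((φ ^ (n + 1)) b) = G.dist a (φ b) := by
  rw [pow_succ, RelIso.mul_apply, dist_map_iso]

theorem parallel_pow_of_backtrack (hc : G.Connected) {n : ℕ} (hxz : G.Adj x z)
    (hz_step : G.dist x (φ x) = G.dist z (φ x) + 1)
    (hx_pow : G.dist x ((φ ^ n) x) = n * G.dist x (φ x))
    (hz_pow : G.dist z ((φ ^ (n + 1)) z) = (n + 1) * G.dist x (φ x))
    (h_back : G.dist x ((φ ^ (n + 1)) x) = G.dist x ((φ ^ (n + 1)) z) + 1) :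
    Parallel G x z ((φ ^ (n + 1)) z) ((φ ^ (n + 1)) x) where
  adj_left := hxz
  adj_right := (φ ^ (n + 1)).map_adj_iff.2 hxz.symm
  dist_left := h_back
  dist_right := by
    have h_le : G.dist z ((φ ^ (n + 1)) x) + 1 ≤ (n + 1) * G.dist x (φ x) :=
      calc G.dist z ((φ ^ (n + 1)) x) + 1
          ≤ G.dist z (φ x) + G.dist (φ x) ((φ ^ (n + 1)) x) + 1 := by
            gcongr
            exact hc.dist_triangle
        _ = G.dist x (φ x) + n * G.dist x (φ x) := by
            rw [pow_succ', RelIso.mul_apply, dist_map_iso, hx_pow, hz_step]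
            ring
        _ = (n + 1) * G.dist x (φ x) := by ring
    have h_lip := ((φ ^ (n + 1)).map_adj_iff.2 hxz).diff_dist_adj (u := z)
    omega

theorem dist_pow_apply_of_mem_minSet (hG : ModularGraph G) {o : V → V → Bool}
    (ho : CubicalOrientation G o) (hφ : ∀ u v, G.Adj u v → o (φ u) (φ v) = o u v)
    (hx : x ∈ minSet φ) (n : ℕ) : G.dist x ((φ ^ n) x) = n * G.dist x (φ x) := by
  induction n using Nat.twoStepInduction generalizing x with
  | zero => simp
  | one => simp
  | more n ih_n ih_succ =>
    suffices h_geodesic : G.dist x ((φ ^ (n + 2)) x) =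
        G.dist x ((φ ^ (n + 1)) x) + G.dist ((φ ^ (n + 1)) x) ((φ ^ (n + 2)) x) by
      rw [h_geodesic, ih_succ hx, dist_pow_succ_apply]
      ring
    refine hG.1.dist_triangle.antisymm (not_lt.1 fun h_lt => ?_)
    obtain ⟨y, hy_adj, hy_back, hy_step⟩ := hG.exists_adj_of_dist_lt h_lt
    obtain ⟨z, rfl⟩ := (φ ^ (n + 1)).surjective y
    have hxz : G.Adj x z := (φ ^ (n + 1)).map_adj_iff.1 hy_adj
    have hz_step : G.dist x (φ x) = G.dist z (φ x) + 1 := by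
      simpa only [dist_pow_succ_apply] using hy_step
    have hz : z ∈ minSet φ := mem_minSet_of_adj hx hxz hz_step
    have hz_pow : G.dist z ((φ ^ (n + 1)) z) = (n + 1) * G.dist x (φ x) := by
      rw [ih_succ hz, dist_eq_of_mem_minSet hx hz]
    exact ho.not_parallel_map_swap hG (orientation_pow_apply hφ (n + 1)) x z
      (parallel_pow_of_backtrack hG.1 hxz hz_step (ih_n hx) hz_pow hy_back)

end MinSet

section Axis

variable {V : Type*} {G : SimpleGraph V}

theorem dist_le_natAbs_sub_of_adj {L : ℤ → V} (hL : ∀ i, G.Adj (L i) (L (i + 1))) (i j : ℤ) :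
    G.dist (L i) (L j) ≤ (i - j).natAbs := by
  wlog hij : i ≤ j generalizing i j
  · rw [dist_comm, ← Int.natAbs_neg, neg_sub]
    exact this j i (le_of_not_ge hij)
  induction j, hij using Int.leInduction with
  | base => simp
  | succ j hij ih =>
    have h_lip := (hL j).diff_dist_adj (u := L i)
    omega

theorem dist_eq_natAbs_sub_of_adj (hc : G.Connected) {L : ℤ → V}
    (hL : ∀ i, G.Adj (L i) (L (i + 1)))
    (h_far : ∀ i j, ∃ a ≤ i, ∃ b ≥ j, G.dist (L a) (L b) = (a - b).natAbs) (i j : ℤ) :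
    G.dist (L i) (L j) = (i - j).natAbs := by
  wlog hij : i ≤ j generalizing i j
  · rw [dist_comm, ← Int.natAbs_neg, neg_sub]
    exact this j i (le_of_not_ge hij)
  obtain ⟨a, hai, b, hjb, hab⟩ := h_far i j
  have h_triangle_i : G.dist (L a) (L b) ≤ G.dist (L a) (L i) + G.dist (L i) (L b) :=
    hc.dist_triangle
  have h_triangle_j : G.dist (L i) (L b) ≤ G.dist (L i) (L j) + G.dist (L j) (L b) :=
    hc.dist_triangle
  have h_ai := dist_le_natAbs_sub_of_adj hL a i
  have h_ij := dist_le_natAbs_sub_of_adj hL i j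
  have h_jb := dist_le_natAbs_sub_of_adj hL j b
  omega

variable {φ : G ≃g G} {x : V}

/-- The bi-infinite concatenation of the `φ`-translates of a walk `p` from `x` to `φ x`, which is
traversed by the indices from `0` to `p.length`. It is meant for walks of positive length. -/
def axis (φ : G ≃g G) (p : G.Walk x (φ x)) (i : ℤ) : V :=
  (φ ^ (i / p.length)) (p.getVert (i % p.length).toNat)

variable {p : G.Walk x (φ x)}

theorem axis_add_length (hp : 0 < p.length) (i : ℤ) :
    axis φ p (i + p.length) = φ (axis φ p i) := by
  have hp' : (p.length : ℤ) ≠ 0 := by omega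
  rw [axis, axis, Int.add_emod_right, Int.add_ediv_of_dvd_right dvd_rfl, Int.ediv_self hp',
    add_comm, zpow_one_add, RelIso.mul_apply]

theorem axis_mul_length_add (hp : 0 < p.length) (k : ℤ) {r : ℕ} (hr : r ≤ p.length) :
    axis φ p (k * p.length + r) = (φ ^ k) (p.getVert r) := by
  have hp' : (p.length : ℤ) ≠ 0 := by omega
  obtain hr | rfl := hr.lt_or_eq
  · have hr' : (r : ℤ) < p.length := by omega
    have h_div : (k * p.length + r) / p.length = k := by
      rw [add_comm, Int.add_mul_ediv_right _ _ hp', Int.ediv_eq_zero_of_lt (by omega) hr', zero_add]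
    have h_mod : (k * p.length + r) % p.length = r := by
      rw [add_comm, Int.add_mul_emod_self_right, Int.emod_eq_of_lt (by omega) hr']
    rw [axis, h_div, h_mod, Int.toNat_natCast]
  · rw [axis_add_length hp, axis, Int.mul_ediv_cancel _ hp', Int.mul_emod_left, p.getVert_length,
      Int.toNat_zero, p.getVert_zero, ← RelIso.mul_apply, ← RelIso.mul_apply,
      (Commute.self_zpow φ k).eq]

theorem axis_mul_length (hp : 0 < p.length) (k : ℤ) : axis φ p (k * p.length) = (φ ^ k) x := by
  simpa using axis_mul_length_add hp k (Nat.zero_le _)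

theorem adj_axis_add_one (hp : 0 < p.length) (i : ℤ) :
    G.Adj (axis φ p i) (axis φ p (i + 1)) := by
  obtain ⟨k, r, hr, rfl⟩ : ∃ k : ℤ, ∃ r : ℕ, r < p.length ∧ i = k * p.length + r := by
    have h_nonneg := i.emod_nonneg (b := p.length) (by omega)
    have h_lt := i.emod_lt_of_pos (b := p.length) (by omega)
    refine ⟨i / p.length, (i % p.length).toNat, by omega, ?_⟩
    rw [Int.toNat_of_nonneg h_nonneg, Int.ediv_mul_add_emod]
  have h_succ := axis_mul_length_add (φ := φ) hp k (Nat.succ_le_of_lt hr)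
  rw [Nat.cast_succ, ← add_assoc] at h_succ
  rw [axis_mul_length_add hp k hr.le, h_succ]
  exact (φ ^ k).map_adj_iff.2 (p.adj_getVert_succ hr)

theorem dist_zpow_apply (h_pow : ∀ n : ℕ, G.dist x ((φ ^ n) x) = n * G.dist x (φ x)) (k l : ℤ) :
    G.dist ((φ ^ k) x) ((φ ^ l) x) = (k - l).natAbs * G.dist x (φ x) := by
  wlog hkl : k ≤ l generalizing k l
  · rw [dist_comm, ← Int.natAbs_neg, neg_sub]
    exact this l k (le_of_not_ge hkl)
  obtain ⟨n, rfl⟩ := Int.le.dest hkl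
  rw [zpow_add, RelIso.mul_apply, dist_map_iso, zpow_natCast, h_pow, sub_add_cancel_left,
    Int.natAbs_neg, Int.natAbs_natCast]

theorem dist_axis (hc : G.Connected) (hp : 0 < p.length) (hp_dist : p.length = G.dist x (φ x))
    (h_pow : ∀ n : ℕ, G.dist x ((φ ^ n) x) = n * G.dist x (φ x)) (i j : ℤ) :
    G.dist (axis φ p i) (axis φ p j) = (i - j).natAbs := by
  refine dist_eq_natAbs_sub_of_adj hc (adj_axis_add_one hp) (fun i j => ?_) i j
  refine ⟨i / p.length * p.length, Int.ediv_mul_le i (by omega),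
    (j / p.length + 1) * p.length, (Int.lt_ediv_add_one_mul_self j (by omega)).le, ?_⟩
  rw [axis_mul_length hp, axis_mul_length hp, dist_zpow_apply h_pow, ← sub_mul, Int.natAbs_mul,
    Int.natAbs_natCast, hp_dist]

theorem exists_axis (hc : G.Connected)
    (h_pow : ∀ n : ℕ, G.dist x ((φ ^ n) x) = n * G.dist x (φ x)) (hx : φ x ≠ x) :
    ∃ L : ℤ → V, (∀ i j : ℤ, G.dist (L i) (L j) = (i - j).natAbs) ∧
      ∃ t : ℤ, t ≠ 0 ∧ ∀ i : ℤ, φ (L i) = L (i + t) := by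
  obtain ⟨p, hp_dist⟩ := hc.exists_walk_length_eq_dist x (φ x)
  have hp : 0 < p.length := hp_dist ▸ hc.pos_dist_of_ne hx.symm
  exact ⟨axis φ p, dist_axis hc hp hp_dist h_pow, p.length, by omega,
    fun i => (axis_add_length hp i).symm⟩

end Axis

theorem orientation_preserving_automorphism_semisimple_general {V : Type*} {G : SimpleGraph V}
    (hG : ModularGraph G) {o : V → V → Bool} (ho : CubicalOrientation G o) (φ : G ≃g G)
    (hφ : ∀ u v, G.Adj u v → o (φ u) (φ v) = o u v) {x : V} (hx : x ∈ minSet φ) :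
    (∀ n : ℕ, G.dist x (φ^[n] x) = n * G.dist x (φ x)) ∧
      ((∃ v : V, φ v = v) ∨
        ∃ L : ℤ → V, (∀ i j : ℤ, G.dist (L i) (L j) = (i - j).natAbs) ∧
          ∃ t : ℤ, t ≠ 0 ∧ ∀ i : ℤ, φ (L i) = L (i + t)) := by
  have h_pow := dist_pow_apply_of_mem_minSet hG ho hφ hx
  refine ⟨fun n => ?_, ?_⟩
  · rw [← h_pow n, coe_pow_iso]
  · by_cases hfix : φ x = x
    · exact Or.inl ⟨x, hfix⟩
    · exact Or.inr (exists_axis hG.1 h_pow hfix)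

/-- Semisimplicity: an automorphism of a median graph preserving a cubical
orientation translates any point of its minimizing set by `n·ℓ(f)` under `fⁿ`;
in particular it is elliptic or loxodromic. -/
theorem orientation_preserving_automorphism_semisimple {V : Type*}
    (𝒢 : SimpleGraph V) (hG : MedianGraph 𝒢)
    (o : V → V → Bool) (ho : CubicalOrientation 𝒢 o)
    (f : V → V) (hbij : Function.Bijective f)
    (hadj : ∀ u v : V, 𝒢.Adj u v ↔ 𝒢.Adj (f u) (f v))
    (hpres : ∀ u v : V, 𝒢.Adj u v → o (f u) (f v) = o u v)
    (x : V) (hmin : ∀ y : V, 𝒢.dist x (f x) ≤ 𝒢.dist y (f y)) :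
    (∀ n : ℕ, 𝒢.dist x (f^[n] x) = n * 𝒢.dist x (f x)) ∧
      ((∃ v : V, f v = v) ∨
        ∃ L : ℤ → V, (∀ i j : ℤ, 𝒢.dist (L i) (L j) = (i - j).natAbs) ∧
          ∃ t : ℤ, t ≠ 0 ∧ ∀ i : ℤ, f (L i) = L (i + t)) := by
  exact orientation_preserving_automorphism_semisimple_general hG.modularGraph ho
    ⟨Equiv.ofBijective f hbij, (hadj _ _).symm⟩ hpres hmin
end

section
/- Let 𝒢 be a median graph and consider the equivalence relation on walks of 𝒢 generated by the following endpoint-preserving elementary moves: (i) inserting or deleting a backtrack, i.e., two consecutive steps u→w→u traversing the same edge back and forth; (ii) flipping a square, i.e., replacing two consecutive steps u→v→w by u→v'→w whenever u, v, w, v' are four pairwise distinct vertices with u adjacent to v, v adjacent to w, w adjacent to v', and v' adjacent to u. Then any two walks of 𝒢 with the same starting vertex and the same ending vertex are equivalent under this relation. -/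
/-- Elementary moves on walks: deleting a backtrack, flipping a square (replacing
two consecutive steps `u → v → w` by `u → v' → w` across a 4-cycle), and the
congruence rule allowing a move anywhere inside a walk. -/
inductive WalkMove {V : Type*} (G : SimpleGraph V) :
    ∀ {u v : V}, G.Walk u v → G.Walk u v → Prop
  | backtrack {u w v : V} (h : G.Adj u w) (p : G.Walk u v) :
      WalkMove G (SimpleGraph.Walk.cons h (SimpleGraph.Walk.cons h.symm p)) p
  | square {u v w v' y : V} (h1 : G.Adj u v) (h2 : G.Adj v w)
      (h3 : G.Adj u v') (h4 : G.Adj v' w)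
      (huv : u ≠ v) (huw : u ≠ w) (huv' : u ≠ v') (hvw : v ≠ w) (hvv' : v ≠ v')
      (hwv' : w ≠ v') (p : G.Walk w y) :
      WalkMove G (SimpleGraph.Walk.cons h1 (SimpleGraph.Walk.cons h2 p))
        (SimpleGraph.Walk.cons h3 (SimpleGraph.Walk.cons h4 p))
  | cons {u v w : V} (h : G.Adj u v) {p q : G.Walk v w} :
      WalkMove G p q → WalkMove G (SimpleGraph.Walk.cons h p) (SimpleGraph.Walk.cons h q)

/-!
A median of `a`, `b`, `v` with `a` and `b` adjacent must be one of `a`, `b`, so the distance to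
`v` changes by exactly one along every edge; and if `a ≠ b` are neighbours of `u` at the same
distance from `v`, their median with `v` is a common neighbour one step closer to `v` (the
quadrangle condition). Given two geodesics from `u` to `v` with first steps to `a` and `b`, this
allows, by induction on the length, to pass from one to the other across the square on `u`, `a`,
`b` and this common neighbour. An arbitrary walk is straightened from its end: prepending an edge
`u → a` to a geodesic either gives a geodesic, or `a` is farther from `v` than `u`, and then the
geodesic from `a` may be chosen through `u`, creating a backtrack.
-/

/-- The equivalence of walks generated by backtrack insertions and deletions and square flips, as
the equivalence closure of `WalkMove` for fixed endpoints. -/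
def WalkEquiv {V : Type*} {G : SimpleGraph V} {u v : V} (p q : G.Walk u v) : Prop :=
  Relation.EqvGen (fun p q : G.Walk u v => WalkMove G p q) p q

/-- A modular graph: connected, and every triple of vertices has a median, not necessarily
unique. -/
structure ModularGraph_s19 {V : Type*} (G : SimpleGraph V) : Prop where
  connected : G.Connected
  exists_isMedianOf (x y z : V) : ∃ m : V, IsMedianOf G m x y z

section

open SimpleGraph

variable {V : Type*} {G : SimpleGraph V}

namespace WalkEquiv

variable {u v w : V}

theorem of_walkMove {p q : G.Walk u v} (h : WalkMove G p q) : WalkEquiv p q :=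
  .rel p q h

theorem refl (p : G.Walk u v) : WalkEquiv p p :=
  Relation.EqvGen.refl p

theorem symm {p q : G.Walk u v} (h : WalkEquiv p q) : WalkEquiv q p :=
  Relation.EqvGen.symm p q h

theorem trans {p q r : G.Walk u v} (hpq : WalkEquiv p q) (hqr : WalkEquiv q r) :
    WalkEquiv p r :=
  Relation.EqvGen.trans p q r hpq hqr

instance : Trans (WalkEquiv (G := G) (u := u) (v := v)) WalkEquiv WalkEquiv where
  trans := trans

theorem cons (h : G.Adj u v) {p q : G.Walk v w} (hpq : WalkEquiv p q) :
    WalkEquiv (Walk.cons h p) (Walk.cons h q) := by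
  induction hpq with
  | rel p q hpq => exact of_walkMove (.cons h hpq)
  | refl p => exact refl _
  | symm p q _ ih => exact ih.symm
  | trans p q r _ _ ihpq ihqr => exact ihpq.trans ihqr

theorem cons_cons_symm (h : G.Adj u w) (p : G.Walk u v) :
    WalkEquiv (Walk.cons h (Walk.cons h.symm p)) p :=
  of_walkMove (.backtrack h p)

theorem cons_cons {a b : V} (hua : G.Adj u a) (haw : G.Adj a w) (hub : G.Adj u b)
    (hbw : G.Adj b w) (p : G.Walk w v) :
    WalkEquiv (Walk.cons hua (Walk.cons haw p)) (Walk.cons hub (Walk.cons hbw p)) := by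
  obtain rfl | hab := eq_or_ne a b
  · exact refl _
  obtain rfl | huw := eq_or_ne u w
  · exact (cons_cons_symm hua p).trans (cons_cons_symm hub p).symm
  · exact of_walkMove (.square hua haw hub hbw hua.ne huw hub.ne haw.ne hab hbw.ne' p)

end WalkEquiv

theorem MedianGraph.modularGraph_s19 (hG : MedianGraph G) : ModularGraph_s19 G where
  connected := hG.1
  exists_isMedianOf x y z := (hG.2 x y z).exists

namespace ModularGraph_s19

variable {u v a b : V}

theorem dist_eq_dist_add_one_or (hG : ModularGraph_s19 G) (hab : G.Adj a b) (v : V) :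
    G.dist a v = G.dist b v + 1 ∨ G.dist b v = G.dist a v + 1 := by
  obtain ⟨m, hm_ab, hm_bv, hm_av⟩ := hG.exists_isMedianOf a b v
  have hab_dist : G.dist a b = 1 := dist_eq_one_iff_adj.2 hab
  have hbm : G.dist b m = G.dist m b := dist_comm
  omega

theorem exists_adj_adj_dist_eq_add_one (hG : ModularGraph_s19 G) (hua : G.Adj u a)
    (hub : G.Adj u b) (hne : a ≠ b) (hdist : G.dist a v = G.dist b v) :
    ∃ m, G.Adj a m ∧ G.Adj m b ∧ G.dist a v = G.dist m v + 1 := by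
  obtain ⟨m, hm_ab, hm_bv, hm_av⟩ := hG.exists_isMedianOf a b v
  have hbm : G.dist b m = G.dist m b := dist_comm
  have hab_pos : 0 < G.dist a b := hG.connected.pos_dist_of_ne hne
  have hab_le : G.dist a b ≤ 2 := dist_le (Walk.cons hua.symm (Walk.cons hub Walk.nil))
  have ham : G.dist a m = 1 := by omega
  have hmb : G.dist m b = 1 := by omega
  exact ⟨m, dist_eq_one_iff_adj.1 ham, dist_eq_one_iff_adj.1 hmb, by omega⟩

theorem walkEquiv_of_length_eq_dist (hG : ModularGraph_s19 G) {p q : G.Walk u v}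
    (hp : p.length = G.dist u v) (hq : q.length = G.dist u v) : WalkEquiv p q := by
  induction hn : p.length generalizing u with
  | zero =>
    cases Walk.eq_of_length_eq_zero hn
    have hp_nil : p = Walk.nil := (Walk.length_eq_zero_iff.1 hn).eq_nil
    have hq_nil : q = Walk.nil := (Walk.length_eq_zero_iff.1 (by omega)).eq_nil
    rw [hp_nil, hq_nil]
    exact .refl _
  | succ n ih =>
    cases p with
    | nil => cases hn
    | @cons _ a _ hua p =>
    cases q with
    | nil => cases hp.trans hq.symm
    | @cons _ b _ hub q =>
    have hp' : p.length = G.dist a v :=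
      length_eq_dist_of_subwalk hp (Walk.isSubwalk_rfl p |>.cons hua)
    have hq' : q.length = G.dist b v :=
      length_eq_dist_of_subwalk hq (Walk.isSubwalk_rfl q |>.cons hub)
    rw [Walk.length_cons] at hp hq hn
    obtain rfl | hab := eq_or_ne a b
    · exact (ih hp' hq' (by omega)).cons hua
    obtain ⟨m, ham, hmb, hm⟩ := hG.exists_adj_adj_dist_eq_add_one hua hub hab
      (by omega : G.dist a v = G.dist b v)
    obtain ⟨r, hr⟩ := hG.connected.exists_walk_length_eq_dist m v
    calc
      WalkEquiv (.cons hua p) (.cons hua (.cons ham r)) :=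
        (ih hp' (by rw [Walk.length_cons]; omega) (by omega)).cons hua
      WalkEquiv _ (.cons hub (.cons hmb.symm r)) := .cons_cons ..
      WalkEquiv _ (.cons hub q) :=
        (ih (by rw [Walk.length_cons]; omega) hq' (by rw [Walk.length_cons]; omega)).cons hub

theorem walkEquiv_of_length_eq_dist_right (hG : ModularGraph_s19 G) (p : G.Walk u v)
    {q : G.Walk u v} (hq : q.length = G.dist u v) : WalkEquiv p q := by
  induction p with
  | nil => exact hG.walkEquiv_of_length_eq_dist dist_self.symm hq
  | @cons u a v h p ih =>
    obtain hlt | hgt := hG.dist_eq_dist_add_one_or h v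
    · obtain ⟨g, hg⟩ := hG.connected.exists_walk_length_eq_dist a v
      have hcons : (Walk.cons h g).length = G.dist u v := by rw [Walk.length_cons, hg, hlt]
      exact ((ih hg).cons h).trans (hG.walkEquiv_of_length_eq_dist hcons hq)
    · have hcons : (Walk.cons h.symm q).length = G.dist a v := by rw [Walk.length_cons, hq, hgt]
      exact ((ih hcons).cons h).trans (.cons_cons_symm h q)

end ModularGraph_s19

end

theorem walks_equivalent_by_backtracks_and_square_flips_general {V : Type*}
    (G : SimpleGraph V) (hG : ModularGraph_s19 G) {u v : V} (p q : G.Walk u v) :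
    Relation.EqvGen (fun p q : G.Walk u v => WalkMove G p q) p q := by
  obtain ⟨g, hg⟩ := hG.connected.exists_walk_length_eq_dist u v
  have hpg : WalkEquiv p g := hG.walkEquiv_of_length_eq_dist_right p hg
  have hqg : WalkEquiv q g := hG.walkEquiv_of_length_eq_dist_right q hg
  exact hpg.trans hqg.symm

/-- In a median graph, any two walks with the same endpoints are equivalent under
the equivalence relation generated by backtrack insertions/deletions and square
flips. -/
theorem walks_equivalent_by_backtracks_and_square_flips {V : Type*}
    (G : SimpleGraph V) (hG : MedianGraph G) {u v : V} (p q : G.Walk u v) :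
    Relation.EqvGen (fun p q : G.Walk u v => WalkMove G p q) p q :=
  walks_equivalent_by_backtracks_and_square_flips_general G hG.modularGraph_s19 p q
end
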